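/- Let s ∈ (0,1), let Ω = ∪_{i=1}^M (a_i,b_i) where the closed intervals [a_i,b_i] are pairwise disjoint, let u ∈ C²₀(Ω) be such that |u'| is integrable on Ω, and let x ∈ ℝ with x ∉ {a_1,b_1,…,a_M,b_M}. Then (−Δ)^s u(x) exists and: (i) if s ≠ 1/2, the function F(x) = Σ_{i=1}^M ∫_{a_i}^{b_i} |x−y|^{1−2s} u'(y) dy is differentiable at x and (−Δ)^s u(x) = C_s F'(x); (ii) if s = 1/2, the function G(x) = Σ_{i=1}^M ∫_{a_i}^{b_i} ln|x−y| u'(y) dy is differentiable at x and (−Δ)^{1/2} u(x) = (1/π) G'(x). -/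

import Mathlib

open MeasureTheory Filter Set

/-- The normalization constant `C₁(s) = 2^{2s} s Γ(s+1/2) / (√π Γ(1−s))`. -/
noncomputable def C1 (s : ℝ) : ℝ :=
  2 ^ (2 * s) * s * Real.Gamma (s + 1 / 2) / (Real.sqrt Real.pi * Real.Gamma (1 - s))

/-- The constant `C_s = C₁(s)/(2s(1−2s))`. -/
noncomputable def Cs (s : ℝ) : ℝ := C1 s / (2 * s * (1 - 2 * s))

/-- `HasFracLap s u x V` means the limit defining `(−Δ)^s u (x)` exists and equals `V`. -/
def HasFracLap (s : ℝ) (u : ℝ → ℝ) (x V : ℝ) : Prop :=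
  Filter.Tendsto
    (fun ε : ℝ => C1 s * ∫ y in {y : ℝ | ε ≤ |y|}, (u x - u (x - y)) * |y| ^ (-1 - 2 * s))
    (nhdsWithin 0 (Set.Ioi 0)) (nhds V)

lemma split_abs (f : ℝ → ℝ) (ε : ℝ) (hε : 0 ≤ ε) (hf : IntegrableOn f {y : ℝ | ε ≤ |y|}) :
    IntegrableOn f (Ioi ε) ∧ IntegrableOn (fun y => f (-y)) (Ioi ε) ∧
    ∫ y in {y : ℝ | ε ≤ |y|}, f y = ∫ y in Ioi ε, (f y + f (-y)) := by
  have hset : {y : ℝ | ε ≤ |y|} = Iic (-ε) ∪ Ici ε := by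
    ext y
    simp only [mem_ofPred_eq, mem_union, mem_Iic, mem_Ici, le_abs]
    constructor
    · rintro (h | h)
      · exact Or.inr h
      · exact Or.inl (by linarith)
    · rintro (h | h)
      · exact Or.inr (by linarith)
      · exact Or.inl h
  have h1 : IntegrableOn f (Ioi ε) := hf.mono_set (by
    rw [hset]; exact Ioi_subset_Ici_self.trans subset_union_right)
  have h2 : IntegrableOn f (Iic (-ε)) := hf.mono_set (by rw [hset]; exact subset_union_left)
  have h3 : IntegrableOn (fun y => f (-y)) (Ioi ε) := by
    have : IntegrableOn (fun y => f (-y)) (Ici ε) := h2.comp_neg_Ici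
    exact this.mono_set Ioi_subset_Ici_self
  refine ⟨h1, h3, ?_⟩
  rw [integral_add h1 h3, integral_comp_neg_Ioi, hset]
  have hae : (Iic (-ε) ∪ Ici ε : Set ℝ) =ᵐ[volume] (Iic (-ε) ∪ Ioi ε : Set ℝ) :=
    (ae_eq_refl _).union Ioi_ae_eq_Ici.symm
  rw [setIntegral_congr_set hae, setIntegral_union _ measurableSet_Ioi h2 h1, add_comm]
  rw [Set.disjoint_left]
  intro y hy hy'
  simp only [mem_Iic, mem_Ioi] at hy hy'
  linarith

structure GoodKernel (K k : ℝ → ℝ) : Prop where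
  locInt : LocallyIntegrable K
  der : ∀ z, z ≠ 0 → HasDerivAt K (k z) z
  even : ∀ z, K (-z) = K z
  odd : ∀ z, k (-z) = - k z
  cont : ContinuousOn k {0}ᶜ
  measK : Measurable K
  meask : Measurable k
  lim : Tendsto (fun y => K y * y) (nhdsWithin 0 (Ioi 0)) (nhds 0)
  int : IntegrableOn (fun y => k y * y) (Ioc 0 1)

lemma lemA1 {K k : ℝ → ℝ} (H : GoodKernel K k) (g : ℝ → ℝ) (hg : ContDiff ℝ 1 g)
    (hcg : HasCompactSupport g) (x : ℝ) :
    (∀ t, Integrable (fun y => K (t - y) * g y)) ∧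
    IntegrableOn (fun y => k y * (g (x - y) - g (x + y))) (Ioi 0) ∧
    HasDerivAt (fun t => ∫ y, K (t - y) * g y)
      (∫ y in Ioi 0, k y * (g (x - y) - g (x + y))) x := by
  have hder := hcg.hasDerivAt_convolution_left (ContinuousLinearMap.mul ℝ ℝ) (μ := volume) hg
    H.locInt x
  have hex := hcg.convolutionExists_left (ContinuousLinearMap.mul ℝ ℝ) (μ := volume) hg.continuous
    H.locInt
  have hex' := hcg.deriv.convolutionExists_left (ContinuousLinearMap.mul ℝ ℝ) (μ := volume)
    (hg.continuous_deriv le_rfl) H.locInt x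
  have hfun : (fun t => ∫ y, K (t - y) * g y) =
      convolution g K (ContinuousLinearMap.mul ℝ ℝ) volume := by
    funext t
    simp [convolution, mul_comm]
  -- the bound on the odd part
  obtain ⟨C, hC⟩ := ContDiff.lipschitzWith_of_hasCompactSupport hcg hg (by norm_num)
  have hq : ∀ y, 0 < y → |g (x - y) - g (x + y)| ≤ 2 * C * y := by
    intro y hy
    have := hC.dist_le_mul (x - y) (x + y)
    rw [Real.dist_eq, Real.dist_eq] at this
    rw [show x - y - (x + y) = -(2 * y) by ring, abs_neg, abs_of_pos (by linarith : 0 < 2 * y)] at this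
    linarith
  obtain ⟨R, hR⟩ : ∃ R : ℝ, ∀ y, R < y → g (x - y) = 0 ∧ g (x + y) = 0 := by
    obtain ⟨R, hR⟩ := hcg.isCompact.isBounded.subset_closedBall x
    refine ⟨R, fun y hy => ⟨?_, ?_⟩⟩
    · by_contra h
      have := hR (subset_tsupport g h)
      rw [Metric.mem_closedBall, Real.dist_eq] at this
      have h2 := neg_abs_le (x - y - x)
      linarith
    · by_contra h
      have := hR (subset_tsupport g h)
      rw [Metric.mem_closedBall, Real.dist_eq] at this
      have h2 := le_abs_self (x + y - x)
      linarith
  have hkc : ContinuousOn k (Ioi 0) := H.cont.mono (fun y hy => ne_of_gt hy)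
  have hgc := hg.continuous
  have hint : IntegrableOn (fun y => k y * (g (x - y) - g (x + y))) (Ioi 0) := by
    have e : (Ioi 0 : Set ℝ) = Ioc 0 1 ∪ (Ioc 1 (max 1 R) ∪ Ioi (max 1 R)) := by
      rw [Ioc_union_Ioi_eq_Ioi (le_max_left _ _), Ioc_union_Ioi_eq_Ioi zero_le_one]
    rw [e]
    refine IntegrableOn.union ?_ (IntegrableOn.union ?_ ?_)
    · refine Integrable.mono' ((H.int.norm).const_mul (2 * C)) ?_ ?_
      · exact (H.meask.mul (by fun_prop)).aestronglyMeasurable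
      · refine (ae_restrict_iff' measurableSet_Ioc).2 (Eventually.of_forall ?_)
        intro y hy
        rw [norm_mul, norm_mul, Real.norm_eq_abs, Real.norm_eq_abs, Real.norm_eq_abs,
          abs_of_pos hy.1]
        have := mul_le_mul_of_nonneg_left (hq y hy.1) (abs_nonneg (k y))
        linarith
    · refine IntegrableOn.mono_set (t := Icc 1 (max 1 R)) ?_ Ioc_subset_Icc_self
      refine ContinuousOn.integrableOn_Icc ?_
      refine ContinuousOn.mul (hkc.mono ?_) (by fun_prop)
      intro y hy
      exact lt_of_lt_of_le one_pos hy.1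
    · refine (integrableOn_congr_fun (f := fun _ => (0:ℝ)) ?_ measurableSet_Ioi).1 integrableOn_zero
      intro y hy
      have := hR y (lt_of_le_of_lt (le_max_right _ _) hy)
      simp [this.1, this.2]
  refine ⟨?_, hint, ?_⟩
  · intro t
    have := hex t
    simp only [ConvolutionExistsAt, ContinuousLinearMap.mul_apply'] at this
    simpa [mul_comm] using this
  rw [hfun]
  suffices hkey : ∫ y in Ioi 0, k y * (g (x - y) - g (x + y)) = ∫ t, deriv g t * K (x - t) by
    rw [hkey]
    exact hder
  simp only [ConvolutionExistsAt, ContinuousLinearMap.mul_apply'] at hex'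
  have hI : Integrable (fun z => deriv g (x - z) * K z) := by
    simpa using hex'.comp_sub_left x
  have h1 : ∫ t, deriv g t * K (x - t) = ∫ z, deriv g (x - z) * K z := by
    rw [← integral_sub_left_eq_self (fun t => deriv g t * K (x - t)) volume x]
    simp
  have hs := split_abs (fun z => deriv g (x - z) * K z) 0 le_rfl hI.integrableOn
  have huniv : {y : ℝ | 0 ≤ |y|} = univ := by ext; simp
  rw [huniv, setIntegral_univ] at hs
  rw [h1, hs.2.2]
  have hqd : ∀ y, HasDerivAt (fun y => g (x + y) - g (x - y)) (deriv g (x + y) + deriv g (x - y)) y := by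
    intro y
    have d : ∀ z, HasDerivAt g (deriv g z) z := fun z =>
      (hg.differentiable (by norm_num) z).hasDerivAt
    have a1 := (d (x + y)).comp_const_add x y
    have a2 := (d (x - y)).comp_const_sub x y
    have a3 := a1.sub a2
    rw [sub_neg_eq_add] at a3
    exact a3
  have ibp := integral_Ioi_mul_deriv_eq_deriv_mul (a := 0) (a' := (0:ℝ)) (b' := (0:ℝ))
    (u := K) (u' := k) (v := fun y => g (x + y) - g (x - y))
    (v' := fun y => deriv g (x + y) + deriv g (x - y))
    (fun y hy => H.der y (ne_of_gt hy)) (fun y _ => hqd y)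
    (by
      refine (hs.1.add hs.2.1).congr_fun ?_ measurableSet_Ioi
      intro y _
      simp only [Pi.add_apply, Pi.mul_apply, H.even, sub_neg_eq_add]
      ring)
    (by
      refine hint.neg.congr_fun ?_ measurableSet_Ioi
      intro y _
      simp only [Pi.neg_apply, Pi.mul_apply]
      ring)
    (by
      have hl : Tendsto (fun y => 2 * C * |K y * y|) (nhdsWithin 0 (Ioi 0)) (nhds 0) := by
        simpa using (H.lim.abs).const_mul (2 * (C:ℝ))
      refine squeeze_zero_norm' ?_ hl
      filter_upwards [self_mem_nhdsWithin] with y hy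
      rw [Pi.mul_apply, norm_mul, Real.norm_eq_abs, Real.norm_eq_abs, abs_mul, abs_of_pos (mem_Ioi.1 hy),
        abs_sub_comm]
      have := mul_le_mul_of_nonneg_left (hq y hy) (abs_nonneg (K y))
      linarith)
    (by
      refine tendsto_const_nhds.congr' ?_
      filter_upwards [eventually_gt_atTop R] with y hy
      simp [(hR y hy).1, (hR y hy).2])
  have e1 : ∫ y in Ioi 0, (deriv g (x - y) * K y + deriv g (x - -y) * K (-y)) =
      ∫ y in Ioi 0, K y * (deriv g (x + y) + deriv g (x - y)) := by
    refine integral_congr_ae (Eventually.of_forall fun y => ?_)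
    simp only [H.even, sub_neg_eq_add]
    ring
  rw [e1, ibp, sub_zero, zero_sub, ← integral_neg]
  refine integral_congr_ae (Eventually.of_forall fun y => ?_)
  ring

lemma lemA2 {K k : ℝ → ℝ} (H : GoodKernel K k) (h : ℝ → ℝ) (hi : Integrable h) (x δ R : ℝ)
    (hδ : 0 < δ) (hR : ∀ y, R < |y| → h y = 0) (h0 : ∀ y, |y - x| < 2 * δ → h y = 0) :
    (∀ᶠ t in nhds x, Integrable (fun y => K (t - y) * h y)) ∧
    IntegrableOn (fun y => k y * (h (x - y) - h (x + y))) (Ioi 0) ∧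
    HasDerivAt (fun t => ∫ y, K (t - y) * h y)
      (∫ y in Ioi 0, k y * (h (x - y) - h (x + y))) x := by
  set S : Set ℝ := {z | δ ≤ |z|} ∩ Metric.closedBall 0 (|x| + δ + R) with hS
  have hSc : IsCompact S := by
    refine IsCompact.inter_left (isCompact_closedBall _ _) ?_
    exact isClosed_le continuous_const continuous_abs
  have hS0 : S ⊆ {0}ᶜ := by
    rintro z ⟨hz, -⟩ rfl
    simp at hz
    linarith
  have hmem : ∀ t ∈ Metric.ball x δ, ∀ y, h y ≠ 0 → t - y ∈ S := by
    intro t ht y hy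
    have hy1 : |y| ≤ R := by
      by_contra hc; exact hy (hR y (not_le.1 hc))
    have hy2 : 2 * δ ≤ |y - x| := by
      by_contra hc; exact hy (h0 y (not_le.1 hc))
    rw [Metric.mem_ball, Real.dist_eq] at ht
    refine ⟨?_, ?_⟩
    · simp only [mem_ofPred_eq]
      have := abs_sub_abs_le_abs_sub (y - x) (t - x)
      rw [show y - x - (t - x) = -(t - y) by ring, abs_neg] at this
      linarith
    · rw [mem_closedBall_zero_iff, Real.norm_eq_abs]
      have e : t - y = (t - x) + x - y := by ring
      have a1 := abs_sub ((t - x) + x) y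
      have a2 := abs_add_le (t - x) x
      rw [← e] at a1
      linarith
  have hKc : ContinuousOn K S := fun z hz => (H.der z (hS0 hz)).continuousAt.continuousWithinAt
  obtain ⟨M, hM⟩ := hSc.exists_bound_of_continuousOn (H.cont.mono hS0)
  obtain ⟨M', hM'⟩ := hSc.exists_bound_of_continuousOn hKc
  have hball : Metric.ball x δ ∈ nhds x := Metric.ball_mem_nhds x hδ
  have hint : ∀ t ∈ Metric.ball x δ, Integrable (fun y => K (t - y) * h y) := by
    intro t ht
    refine Integrable.mono' (hi.norm.const_mul M') ?_ ?_
    · exact (H.measK.comp (measurable_const.sub measurable_id)).aestronglyMeasurable.mul hi.1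
    · refine Eventually.of_forall fun y => ?_
      by_cases hy : h y = 0
      · simp [hy]
      · rw [norm_mul]
        exact mul_le_mul_of_nonneg_right (hM' _ (hmem t ht y hy)) (norm_nonneg _)
  have hmain := hasDerivAt_integral_of_dominated_loc_of_deriv_le (μ := volume) (𝕜 := ℝ)
    (F := fun t y => K (t - y) * h y) (F' := fun t y => k (t - y) * h y)
    (bound := fun y => M * ‖h y‖) hball
    (by filter_upwards [hball] with t ht using (hint t ht).1)
    (hint x (Metric.mem_ball_self hδ))
    ((H.meask.comp (measurable_const.sub measurable_id)).aestronglyMeasurable.mul hi.1)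
    (by
      refine Eventually.of_forall fun y t ht => ?_
      by_cases hy : h y = 0
      · simp [hy]
      · rw [norm_mul]
        exact mul_le_mul_of_nonneg_right (hM _ (hmem t ht y hy)) (norm_nonneg _))
    (hi.norm.const_mul M)
    (by
      refine Eventually.of_forall fun y t ht => ?_
      by_cases hy : h y = 0
      · simpa [hy] using hasDerivAt_const t (0:ℝ)
      · exact ((H.der _ (hS0 (hmem t ht y hy))).comp_sub_const t y).mul_const (h y))
  obtain ⟨hi', hd⟩ := hmain
  have hI : Integrable (fun z => k z * h (x - z)) := by
    simpa using hi'.comp_sub_left x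
  have h1 : ∫ t, k (x - t) * h t = ∫ z, k z * h (x - z) := by
    rw [← integral_sub_left_eq_self (fun t => k (x - t) * h t) volume x]
    simp
  have hs := split_abs (fun z => k z * h (x - z)) 0 le_rfl hI.integrableOn
  have huniv : {y : ℝ | 0 ≤ |y|} = univ := by ext; simp
  rw [huniv, setIntegral_univ] at hs
  refine ⟨by filter_upwards [hball] with t ht using hint t ht, ?_, ?_⟩
  · refine (hs.1.add hs.2.1).congr_fun ?_ measurableSet_Ioi
    intro y _
    simp only [Pi.add_apply, H.odd, sub_neg_eq_add]
    ring
  · suffices hkey : ∫ y in Ioi 0, k y * (h (x - y) - h (x + y)) = ∫ t, k (x - t) * h t by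
      rw [hkey]
      exact hd
    rw [h1, hs.2.2]
    refine integral_congr_ae (Eventually.of_forall fun y => ?_)
    simp only [H.odd, sub_neg_eq_add]
    ring

lemma lemA {K k : ℝ → ℝ} (H : GoodKernel K k) (v : ℝ → ℝ) (hi : Integrable v) (x R : ℝ)
    (hR : ∀ y, R < |y| → v y = 0) (hv : ContDiffAt ℝ 1 v x) :
    IntegrableOn (fun y => k y * (v (x - y) - v (x + y))) (Ioi 0) ∧
    HasDerivAt (fun t => ∫ y, K (t - y) * v y)
      (∫ y in Ioi 0, k y * (v (x - y) - v (x + y))) x := by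
  have hev := hv.eventually (by simp)
  obtain ⟨r, hr, hball⟩ := Metric.eventually_nhds_iff_ball.1 hev
  let f : ContDiffBump x := ⟨r / 4, r / 2, by linarith, by linarith⟩
  set g : ℝ → ℝ := fun y => f y * v y with hgdef
  have hts : tsupport g ⊆ Metric.closedBall x (r / 2) := by
    have := tsupport_mul_subset_left (f := (f : ℝ → ℝ)) (g := v)
    rwa [f.tsupport_eq] at this
  have hcg : HasCompactSupport g := f.hasCompactSupport.mul_right
  have hg : ContDiff ℝ 1 g := by
    refine contDiff_iff_contDiffAt.2 fun y => ?_
    by_cases hy : y ∈ tsupport g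
    · refine f.contDiffAt.mul (hball y ?_)
      exact Metric.closedBall_subset_ball (by linarith) (hts hy)
    · exact contDiffAt_const.congr_of_eventuallyEq (notMem_tsupport_iff_eventuallyEq.1 hy)
  obtain ⟨a1, a2, a3⟩ := lemA1 H g hg hcg x
  have hgi : Integrable g := hg.continuous.integrable_of_hasCompactSupport hcg
  obtain ⟨b1, b2, b3⟩ := lemA2 H (fun y => v y - g y) (hi.sub hgi) x (r / 8) R (by linarith)
    (by intro y hy; simp [hgdef, hR y hy])
    (by
      intro y hy
      have : f y = 1 := f.one_of_mem_closedBall (by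
        rw [Metric.mem_closedBall, Real.dist_eq]
        show |y - x| ≤ r / 4
        linarith)
      simp [hgdef, this])
  have e : ∀ y, k y * (v (x - y) - v (x + y)) = k y * (g (x - y) - g (x + y)) +
      k y * ((v (x - y) - g (x - y)) - (v (x + y) - g (x + y))) := fun y => by ring
  refine ⟨?_, ?_⟩
  · refine (a2.add b2).congr_fun ?_ measurableSet_Ioi
    intro y _
    simp only [Pi.add_apply]
    ring
  · simp only [e]
    rw [integral_add a2 b2]
    refine (a3.add b3).congr_of_eventuallyEq ?_
    filter_upwards [b1] with t ht
    rw [Pi.add_apply, ← integral_add (a1 t) ht]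
    refine integral_congr_ae (Eventually.of_forall fun y => ?_)
    simp only
    ring

lemma locInt_of_even (K : ℝ → ℝ) (he : ∀ z, K (-z) = K z)
    (hi : ∀ A : ℝ, 0 ≤ A → IntegrableOn K (Ioc 0 A)) : LocallyIntegrable K := by
  intro x
  set A := |x| + 1 with hA
  have hA0 : 0 ≤ A := by positivity
  have h1 : IntervalIntegrable K volume 0 A :=
    (intervalIntegrable_iff_integrableOn_Ioc_of_le hA0).2 (hi A hA0)
  have h2 : IntervalIntegrable K volume (-A) 0 := by
    have := ((IntervalIntegrable.iff_comp_neg).1 h1)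
    simp only [he, neg_zero] at this
    exact this.symm
  have h3 := (intervalIntegrable_iff_integrableOn_Icc_of_le (by linarith)).1 (h2.trans h1)
  refine ⟨Icc (-A) A, Icc_mem_nhds ?_ ?_, h3⟩
  · have := neg_abs_le x; linarith
  · have := le_abs_self x; linarith

lemma good_of (s c : ℝ) (hs : s ∈ Ioo (0 : ℝ) 1) (K : ℝ → ℝ) (he : ∀ z, K (-z) = K z)
    (hi : ∀ A : ℝ, 0 ≤ A → IntegrableOn K (Ioc 0 A)) (hm : Measurable K)
    (hd : ∀ z, z ≠ 0 → HasDerivAt K (c * (z * |z| ^ (-1 - 2 * s))) z)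
    (hl : Tendsto (fun y => K y * y) (nhdsWithin 0 (Ioi 0)) (nhds 0)) :
    GoodKernel K (fun z => c * (z * |z| ^ (-1 - 2 * s))) where
  locInt := locInt_of_even K he hi
  der := hd
  even := he
  odd := by intro z; simp
  cont := by
    refine continuousOn_const.mul (continuousOn_id.mul ?_)
    exact continuous_abs.continuousOn.rpow_const (fun z hz => Or.inl (abs_ne_zero.2 hz))
  measK := hm
  meask := by fun_prop
  lim := hl
  int := by
    have h : IntegrableOn (fun y : ℝ => y ^ (1 - 2 * s)) (Ioc 0 1) :=
      (intervalIntegrable_iff_integrableOn_Ioc_of_le zero_le_one).1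
        (intervalIntegral.intervalIntegrable_rpow' (by linarith [hs.2]))
    have h' : IntegrableOn (fun y : ℝ => c * y ^ (1 - 2 * s)) (Ioc 0 1) := h.const_mul c
    refine h'.congr_fun ?_ measurableSet_Ioc
    intro y hy
    simp only
    rw [abs_of_pos hy.1, show 1 - 2 * s = (-1 - 2 * s) + 1 + 1 by ring,
      Real.rpow_add_one hy.1.ne', Real.rpow_add_one hy.1.ne']
    ring

lemma good_pow (s : ℝ) (hs : s ∈ Ioo (0 : ℝ) 1) :
    GoodKernel (fun z => |z| ^ (1 - 2 * s)) (fun z => (1 - 2 * s) * (z * |z| ^ (-1 - 2 * s))) := by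
  refine good_of s _ hs _ (by simp) ?_ (by fun_prop) ?_ ?_
  · intro A hA
    have h : IntegrableOn (fun y : ℝ => y ^ (1 - 2 * s)) (Ioc 0 A) :=
      (intervalIntegrable_iff_integrableOn_Ioc_of_le hA).1
        (intervalIntegral.intervalIntegrable_rpow' (by linarith [hs.2]))
    refine h.congr_fun ?_ measurableSet_Ioc
    intro y hy
    simp only
    rw [abs_of_pos hy.1]
  · intro z hz
    have h := (hasDerivAt_abs hz).rpow_const (p := 1 - 2 * s) (Or.inl (abs_ne_zero.2 hz))
    convert h using 1
    rw [show 1 - 2 * s - 1 = (-1 - 2 * s) + 1 by ring, Real.rpow_add_one (abs_ne_zero.2 hz)]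
    nth_rewrite 1 [← sign_mul_abs z]
    ring
  · have h : Tendsto (fun y : ℝ => y ^ (2 - 2 * s)) (nhdsWithin 0 (Ioi 0)) (nhds 0) := by
      have := (Real.continuousAt_rpow_const 0 (2 - 2 * s) (Or.inr (by linarith [hs.2]))).tendsto
      rw [Real.zero_rpow (by linarith [hs.2])] at this
      exact this.mono_left nhdsWithin_le_nhds
    refine h.congr' ?_
    filter_upwards [self_mem_nhdsWithin] with y hy
    rw [abs_of_pos hy, show 2 - 2 * s = (1 - 2 * s) + 1 by ring, Real.rpow_add_one (ne_of_gt hy)]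

lemma good_log (s : ℝ) (hs : s = 1 / 2) :
    GoodKernel (fun z => Real.log |z|) (fun z => 1 * (z * |z| ^ (-1 - 2 * s))) := by
  refine good_of s _ (by rw [hs]; norm_num) _ (by simp) ?_ (by fun_prop) ?_ ?_
  · intro A hA
    simp only [Real.log_abs]
    exact (intervalIntegrable_iff_integrableOn_Ioc_of_le hA).1
      intervalIntegral.intervalIntegrable_log'
  · intro z hz
    simp only [Real.log_abs]
    convert Real.hasDerivAt_log hz using 1
    rw [hs, show (-1 - 2 * (1 / 2) : ℝ) = ((-2 : ℤ) : ℝ) by norm_num, Real.rpow_intCast]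
    rw [zpow_neg, show (2 : ℤ) = ((2 : ℕ) : ℤ) by rfl, zpow_natCast, sq_abs]
    field_simp
  · simp only [Real.log_abs]
    simpa only [Real.rpow_one] using tendsto_log_mul_rpow_nhdsGT_zero zero_lt_one

lemma int_tail (s ε : ℝ) (hs : 0 < s) (hε : 0 < ε) :
    IntegrableOn (fun y : ℝ => |y| ^ (-1 - 2 * s)) {y : ℝ | ε ≤ |y|} := by
  have hset : {y : ℝ | ε ≤ |y|} = Iic (-ε) ∪ Ici ε := by
    ext y
    simp only [mem_ofPred_eq, mem_union, mem_Iic, mem_Ici, le_abs]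
    constructor
    · rintro (h | h)
      · exact Or.inr h
      · exact Or.inl (by linarith)
    · rintro (h | h)
      · exact Or.inr (by linarith)
      · exact Or.inl h
  have h1 : IntegrableOn (fun y : ℝ => |y| ^ (-1 - 2 * s)) (Ici ε) := by
    have h0 := (integrableOn_Ici_iff_integrableOn_Ioi).2
      (integrableOn_Ioi_rpow_of_lt (a := -1 - 2 * s) (by linarith) hε)
    refine h0.congr_fun ?_ measurableSet_Ici
    intro y hy
    simp only
    rw [abs_of_pos (lt_of_lt_of_le hε hy)]
  have h2 : IntegrableOn (fun y : ℝ => |y| ^ (-1 - 2 * s)) (Iic (-ε)) := by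
    have := IntegrableOn.comp_neg_Iic (c := -ε) (f := fun y : ℝ => |y| ^ (-1 - 2 * s))
      (μ := volume) (by simpa using h1)
    simpa using this
  rw [hset]
  exact h2.union h1

lemma lemB (s : ℝ) (hs : s ∈ Ioo (0 : ℝ) 1) (u v : ℝ → ℝ) (x R : ℝ) (E : Set ℝ)
    (hE : E.Countable) (hu : Continuous u) (hR : ∀ y, R < |y| → u y = 0)
    (hd : ∀ t, t ∉ E → HasDerivAt u (v t) t) (hdx : ∀ᶠ t in nhds x, HasDerivAt u (v t) t)
    (hv : ContDiffAt ℝ 1 v x)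
    (hi : IntegrableOn (fun y => y * |y| ^ (-1 - 2 * s) * (v (x - y) - v (x + y))) (Ioi 0)) :
    HasFracLap s u x (C1 s * ((∫ y in Ioi 0, y * |y| ^ (-1 - 2 * s) * (v (x - y) - v (x + y)))
      / (2 * s))) := by
  have hs0 : 0 < s := hs.1
  set q : ℝ → ℝ := fun y => v (x - y) - v (x + y) with hq
  set w : ℝ → ℝ := fun y => 2 * u x - u (x - y) - u (x + y) with hw
  have hwc : Continuous w := by fun_prop
  have hwd : ∀ y, HasDerivAt u (v (x - y)) (x - y) → HasDerivAt u (v (x + y)) (x + y) →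
      HasDerivAt w (q y) y := by
    intro y h1 h2
    have a1 := h1.comp_const_sub x y
    have a2 := h2.comp_const_add x y
    have a3 := ((hasDerivAt_const y (2 * u x)).sub a1).sub a2
    rw [zero_sub, neg_neg] at a3
    exact a3
  have hcs : HasCompactSupport u := by
    refine HasCompactSupport.of_support_subset_isCompact (isCompact_closedBall (0:ℝ) R) ?_
    intro y hy
    rw [mem_closedBall_zero_iff, Real.norm_eq_abs]
    by_contra hc
    exact hy (hR y (not_le.1 hc))
  obtain ⟨B, hB⟩ := hu.bounded_above_of_compact_support hcs
  -- identity at level ε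
  have key : ∀ ε : ℝ, 0 < ε →
      ∫ y in {y : ℝ | ε ≤ |y|}, (u x - u (x - y)) * |y| ^ (-1 - 2 * s) =
      (w ε * ε ^ (-(2 * s)) + ∫ y in Ioi ε, y * |y| ^ (-1 - 2 * s) * q y) / (2 * s) := by
    intro ε hε
    have hint : IntegrableOn (fun y => (u x - u (x - y)) * |y| ^ (-1 - 2 * s)) {y : ℝ | ε ≤ |y|} := by
      refine Integrable.mono' ((int_tail s ε hs0 hε).const_mul (B + B)) ?_ ?_
      · refine Measurable.aestronglyMeasurable ?_
        have := hu.measurable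
        fun_prop
      · refine Eventually.of_forall fun y => ?_
        rw [norm_mul, Real.norm_of_nonneg (Real.rpow_nonneg (abs_nonneg y) _)]
        refine mul_le_mul_of_nonneg_right ?_ (Real.rpow_nonneg (abs_nonneg y) _)
        exact (norm_sub_le _ _).trans (add_le_add (hB _) (hB _))
    obtain ⟨i1, i2, i3⟩ := split_abs _ ε hε.le hint
    rw [i3]
    have iw : IntegrableOn (fun y => w y * |y| ^ (-1 - 2 * s)) (Ioi ε) := by
      refine (i1.add i2).congr_fun ?_ measurableSet_Ioi
      intro y _
      simp only [Pi.add_apply, abs_neg, sub_neg_eq_add, hw]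
      ring
    have e1 : ∫ y in Ioi ε, ((u x - u (x - y)) * |y| ^ (-1 - 2 * s) +
        (u x - u (x - -y)) * |(-y)| ^ (-1 - 2 * s)) = ∫ y in Ioi ε, w y * |y| ^ (-1 - 2 * s) := by
      refine integral_congr_ae (Eventually.of_forall fun y => ?_)
      simp only [abs_neg, sub_neg_eq_add, hw]
      ring
    rw [e1]
    have iq : IntegrableOn (fun y => y * |y| ^ (-1 - 2 * s) * q y) (Ioi ε) :=
      hi.mono_set (Ioi_subset_Ioi hε.le)
    set D' : ℝ → ℝ := fun y => y * |y| ^ (-1 - 2 * s) * q y - 2 * s * (w y * |y| ^ (-1 - 2 * s))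
      with hD'
    have iD : IntegrableOn D' (Ioi ε) := iq.sub (iw.const_mul (2 * s))
    have hEc : ((fun y => x - y) ⁻¹' E ∪ (fun y => x + y) ⁻¹' E).Countable := by
      refine (hE.preimage ?_).union (hE.preimage ?_)
      · exact sub_right_injective
      · exact add_right_injective x
    have hfin : ∀ T : ℝ, ε ≤ T → ∫ y in ε..T, D' y =
        w T * T ^ (-(2 * s)) - w ε * ε ^ (-(2 * s)) := by
      intro T hT
      refine integral_eq_of_hasDerivAt_off_countable (fun y => w y * y ^ (-(2 * s))) D' hEc ?_ ?_ ?_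
      · rw [uIcc_of_le hT]
        refine hwc.continuousOn.mul (continuousOn_id.rpow_const ?_)
        intro y hy
        exact Or.inl (lt_of_lt_of_le hε hy.1).ne'
      · rw [min_eq_left hT, max_eq_right hT]
        rintro y ⟨hy, hyE⟩
        have hy0 : 0 < y := hε.trans hy.1
        simp only [mem_union, mem_preimage, not_or] at hyE
        have a := (hwd y (hd _ hyE.1) (hd _ hyE.2)).mul
          (Real.hasDerivAt_rpow_const (x := y) (p := -(2 * s)) (Or.inl hy0.ne'))
        suffices hk : D' y = q y * y ^ (-(2 * s)) + w y * (-(2 * s) * y ^ (-(2 * s) - 1)) by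
          rw [hk]
          exact a
        simp only [hD']
        rw [abs_of_pos hy0, show -(2 * s) - 1 = -1 - 2 * s by ring,
          show -(2 * s) = (-1 - 2 * s) + 1 by ring, Real.rpow_add_one hy0.ne']
        ring
      · rw [intervalIntegrable_iff_integrableOn_Ioc_of_le hT]
        exact iD.mono_set Ioc_subset_Ioi_self
    have ht1 := intervalIntegral_tendsto_integral_Ioi ε iD tendsto_id
    have ht2 : Tendsto (fun T : ℝ => ∫ y in ε..(id T), D' y) atTop
        (nhds (2 * u x * 0 - w ε * ε ^ (-(2 * s)))) := by
      have a1 : Tendsto (fun T : ℝ => 2 * u x * T ^ (-(2 * s)) - w ε * ε ^ (-(2 * s))) atTop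
          (nhds (2 * u x * 0 - w ε * ε ^ (-(2 * s)))) :=
        ((tendsto_rpow_neg_atTop (by linarith)).const_mul _).sub_const _
      refine a1.congr' ?_
      filter_upwards [eventually_ge_atTop ε, eventually_gt_atTop (R + |x|)] with T hT hTR
      simp only [id]
      rw [hfin T hT]
      have z1 : u (x - T) = 0 := hR _ (by
        have b1 := abs_sub_abs_le_abs_sub T x
        have b2 := le_abs_self T
        rw [abs_sub_comm] at b1
        linarith)
      have z2 : u (x + T) = 0 := hR _ (by
        have b1 := abs_sub_abs_le_abs_sub T (-x)
        have b2 := le_abs_self T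
        rw [abs_neg, sub_neg_eq_add, add_comm] at b1
        linarith)
      simp only [hw, z1, z2, sub_zero]
    have hval := tendsto_nhds_unique ht1 ht2
    have hsplit : ∫ y in Ioi ε, D' y = (∫ y in Ioi ε, y * |y| ^ (-1 - 2 * s) * q y) -
        2 * s * ∫ y in Ioi ε, w y * |y| ^ (-1 - 2 * s) := by
      rw [← integral_const_mul]
      exact integral_sub iq (iw.const_mul (2 * s))
    rw [hsplit] at hval
    rw [eq_div_iff (by positivity)]
    linarith
  -- the boundary term vanishes
  have hbd : Tendsto (fun ε : ℝ => w ε * ε ^ (-(2 * s))) (nhdsWithin 0 (Ioi 0)) (nhds 0) := by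
    obtain ⟨C, t, ht, hC⟩ := hv.exists_lipschitzOnWith
    obtain ⟨r, hr, hball⟩ := Metric.eventually_nhds_iff_ball.1 (hdx.and ht)
    have hbnd : ∀ ε ∈ Ioo 0 r, |w ε| ≤ 2 * C * ε * ε := by
      intro ε hε
      have hm : ∀ y ∈ Icc 0 ε, x - y ∈ Metric.ball x r ∧ x + y ∈ Metric.ball x r := by
        intro y hy
        rw [Metric.mem_ball, Metric.mem_ball, Real.dist_eq, Real.dist_eq]
        rw [show x - y - x = -y by ring, show x + y - x = y by ring, abs_neg, abs_of_nonneg hy.1]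
        have := lt_of_le_of_lt hy.2 hε.2
        exact ⟨this, this⟩
      have hmv := Convex.norm_image_sub_le_of_norm_hasDerivWithin_le (f := w) (f' := q)
        (s := Icc 0 ε) (C := 2 * C * ε) (x := 0) (y := ε)
        (fun y hy => (hwd y (hball _ (hm y hy).1).1 (hball _ (hm y hy).2).1).hasDerivWithinAt)
        (by
          intro y hy
          have := hC.dist_le_mul (x - y) (hball _ (hm y hy).1).2 (x + y) (hball _ (hm y hy).2).2
          rw [Real.dist_eq, Real.dist_eq, show x - y - (x + y) = -(2 * y) by ring, abs_neg,
            abs_of_nonneg (by linarith [hy.1] : 0 ≤ 2 * y)] at this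
          rw [Real.norm_eq_abs]
          have h2 : (C:ℝ) * y ≤ C * ε := mul_le_mul_of_nonneg_left hy.2 C.2
          calc |q y| ≤ C * (2 * y) := this
            _ ≤ _ := by linarith)
        (convex_Icc _ _) (left_mem_Icc.2 hε.1.le) (right_mem_Icc.2 hε.1.le)
      have hw0 : w 0 = 0 := by simp only [hw, sub_zero, add_zero]; ring
      rw [hw0, sub_zero, sub_zero, Real.norm_eq_abs, Real.norm_eq_abs, abs_of_pos hε.1] at hmv
      exact hmv
    have hlim : Tendsto (fun ε : ℝ => 2 * C * ε ^ (2 - 2 * s)) (nhdsWithin 0 (Ioi 0)) (nhds 0) := by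
      have := (Real.continuousAt_rpow_const 0 (2 - 2 * s) (Or.inr (by linarith [hs.2]))).tendsto
      rw [Real.zero_rpow (by linarith [hs.2])] at this
      simpa using (this.mono_left nhdsWithin_le_nhds).const_mul (2 * (C:ℝ))
    refine squeeze_zero_norm' ?_ hlim
    filter_upwards [Ioo_mem_nhdsGT hr] with ε hε
    have hε0 : 0 < ε := hε.1
    rw [norm_mul, Real.norm_eq_abs, Real.norm_of_nonneg (Real.rpow_nonneg hε0.le _)]
    have := mul_le_mul_of_nonneg_right (hbnd ε hε) (Real.rpow_nonneg hε0.le (-(2 * s)))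
    rw [show 2 - 2 * s = -(2 * s) + 1 + 1 by ring, Real.rpow_add_one hε0.ne',
      Real.rpow_add_one hε0.ne']
    linarith
  have hcov : AECover (volume.restrict (Ioi (0:ℝ))) (nhdsWithin (0:ℝ) (Ioi 0))
      (fun ε : ℝ => Ioi ε) :=
    aecover_Ioi_of_Ioi (tendsto_id.mono_left nhdsWithin_le_nhds)
  have hI := hcov.integral_tendsto_of_countably_generated hi
  unfold HasFracLap
  refine Tendsto.const_mul _ ?_
  have hsum := (hbd.add hI).div_const (2 * s)
  rw [zero_add] at hsum
  refine hsum.congr' ?_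
  filter_upwards [self_mem_nhdsWithin] with ε hε
  rw [key ε hε, Measure.restrict_restrict measurableSet_Ioi,
    inter_eq_left.2 (Ioi_subset_Ioi (le_of_lt (mem_Ioi.1 hε)))]

lemma C1_half : C1 (1 / 2) = 1 / Real.pi := by
  unfold C1
  rw [show (1 / 2 + 1 / 2 : ℝ) = 1 by norm_num, show (1 - 1 / 2 : ℝ) = 1 / 2 by norm_num,
    Real.Gamma_one, Real.Gamma_one_half_eq, Real.mul_self_sqrt Real.pi_pos.le]
  norm_num

lemma main_gen (s c : ℝ) (hs : s ∈ Set.Ioo (0 : ℝ) 1) (hc : c ≠ 0) (K : ℝ → ℝ)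
    (H : GoodKernel K (fun z => c * (z * |z| ^ (-1 - 2 * s))))
    (M : ℕ) (a b : Fin M → ℝ)
    (hdisj : ∀ i j, i ≠ j → Disjoint (Set.Icc (a i) (b i)) (Set.Icc (a j) (b j)))
    (u : ℝ → ℝ) (hu_cont : Continuous u)
    (hu_C2 : ContDiffOn ℝ 2 u (⋃ i, Set.Ioo (a i) (b i)))
    (hu_zero : ∀ y, y ∉ ⋃ i, Set.Ioo (a i) (b i) → u y = 0)
    (hu_int : MeasureTheory.IntegrableOn (deriv u) (⋃ i, Set.Ioo (a i) (b i)))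
    (x : ℝ) (hx : ∀ i, x ≠ a i ∧ x ≠ b i) :
    ∃ F' : ℝ,
        HasDerivAt
          (fun t : ℝ => ∑ i : Fin M, ∫ y in Set.Ioo (a i) (b i), K (t - y) * deriv u y) F' x ∧
        HasFracLap s u x (C1 s / (2 * s * c) * F') := by
  classical
  set vi : Fin M → ℝ → ℝ := fun i => (Ioo (a i) (b i)).indicator (deriv u) with hvi
  set v : ℝ → ℝ := fun t => ∑ i, vi i t with hv
  have hO : IsOpen (⋃ i, Ioo (a i) (b i)) := isOpen_iUnion fun i => isOpen_Ioo
  have hvi_int : ∀ i, Integrable (vi i) := fun i =>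
    (integrable_indicator_iff measurableSet_Ioo).2 (hu_int.mono_set (subset_iUnion_of_subset i le_rfl))
  -- local behaviour away from the end points
  have hloc : ∀ t, (∀ i, t ≠ a i ∧ t ≠ b i) → ∀ i, t ∉ Ioo (a i) (b i) →
      ∀ᶠ y in nhds t, y ∉ Ioo (a i) (b i) := by
    intro t ht i hti
    have hn : t ∉ Icc (a i) (b i) := by
      rintro ⟨h1, h2⟩
      exact hti ⟨lt_of_le_of_ne h1 (ht i).1.symm, lt_of_le_of_ne h2 (ht i).2⟩
    filter_upwards [isClosed_Icc.isOpen_compl.mem_nhds hn] with y hy hy'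
    exact hy (Ioo_subset_Icc_self hy')
  have hvi_C1 : ∀ i, ContDiffAt ℝ 1 (vi i) x := by
    intro i
    by_cases hxi : x ∈ Ioo (a i) (b i)
    · have h1 : ContDiffAt ℝ 1 (deriv u) x := by
        refine ContDiffAt.derivWithin (n := 2)
          (hu_C2.contDiffAt (hO.mem_nhds (mem_iUnion.2 ⟨i, hxi⟩))) ?_
        norm_num
      refine h1.congr_of_eventuallyEq ?_
      filter_upwards [isOpen_Ioo.mem_nhds hxi] with y hy
      exact indicator_of_mem hy _
    · refine (contDiffAt_const (c := (0:ℝ))).congr_of_eventuallyEq ?_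
      filter_upwards [hloc x hx i hxi] with y hy
      exact indicator_of_notMem hy _
  obtain ⟨R, hR⟩ : ∃ R : ℝ, ∀ i y, y ∈ Ioo (a i) (b i) → |y| ≤ R := by
    refine ⟨∑ i, (|a i| + |b i|), fun i y hy => ?_⟩
    refine le_trans ?_ (Finset.single_le_sum (f := fun i => |a i| + |b i|)
      (fun j _ => by positivity) (Finset.mem_univ i))
    rw [abs_le]
    constructor
    · have h1 := neg_abs_le (a i)
      have h2 := abs_nonneg (b i)
      have h3 := hy.1
      linarith
    · have h1 := le_abs_self (b i)
      have h2 := abs_nonneg (a i)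
      have h3 := hy.2
      linarith
  have hviR : ∀ i y, R < |y| → vi i y = 0 := fun i y hy =>
    indicator_of_notMem (fun h => absurd (hR i y h) (not_le.2 hy)) _
  have huR : ∀ y, R < |y| → u y = 0 := by
    intro y hy
    refine hu_zero y fun h => ?_
    obtain ⟨i, hi⟩ := mem_iUnion.1 h
    exact absurd (hR i y hi) (not_le.2 hy)
  have hderiv : ∀ t, (∀ i, t ≠ a i ∧ t ≠ b i) → HasDerivAt u (v t) t := by
    intro t ht
    by_cases h : t ∈ ⋃ i, Ioo (a i) (b i)
    · obtain ⟨i, hi⟩ := mem_iUnion.1 h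
      have e : v t = deriv u t := by
        simp only [hv]
        rw [Finset.sum_eq_single i]
        · exact indicator_of_mem hi _
        · intro j _ hj
          refine indicator_of_notMem (fun h' => ?_) _
          exact Set.disjoint_left.1 (hdisj j i hj) (Ioo_subset_Icc_self h') (Ioo_subset_Icc_self hi)
        · intro h'
          exact absurd (Finset.mem_univ i) h'
      rw [e]
      exact ((hu_C2.contDiffAt (hO.mem_nhds h)).differentiableAt (by norm_num)).hasDerivAt
    · have h' : ∀ i, t ∉ Ioo (a i) (b i) := fun i hi => h (mem_iUnion.2 ⟨i, hi⟩)
      have e : v t = 0 := Finset.sum_eq_zero fun i _ => indicator_of_notMem (h' i) _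
      rw [e]
      refine (hasDerivAt_const t (0:ℝ)).congr_of_eventuallyEq ?_
      filter_upwards [eventually_all.2 fun i => hloc t ht i (h' i)] with y hy
      refine hu_zero y fun hyy => ?_
      obtain ⟨i, hi⟩ := mem_iUnion.1 hyy
      exact hy i hi
  set E : Set ℝ := range a ∪ range b with hE
  have hEf : E.Finite := (finite_range a).union (finite_range b)
  have hEn : ∀ t, t ∉ E → ∀ i, t ≠ a i ∧ t ≠ b i := by
    intro t ht i
    exact ⟨fun h => ht (Or.inl ⟨i, h.symm⟩), fun h => ht (Or.inr ⟨i, h.symm⟩)⟩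
  have hxE : x ∉ E := by
    rintro (⟨i, h⟩ | ⟨i, h⟩)
    · exact (hx i).1 h.symm
    · exact (hx i).2 h.symm
  have hA := fun i => lemA H (vi i) (hvi_int i) x R (hviR i) (hvi_C1 i)
  have hsumI : IntegrableOn (fun y => ∑ i, (c * (y * |y| ^ (-1 - 2 * s))) *
      (vi i (x - y) - vi i (x + y))) (Ioi 0) := integrable_finsetSum _ fun i _ => (hA i).1
  have hpt : ∀ y, ∑ i, (c * (y * |y| ^ (-1 - 2 * s))) * (vi i (x - y) - vi i (x + y)) =
      c * (y * |y| ^ (-1 - 2 * s) * (v (x - y) - v (x + y))) := by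
    intro y
    rw [← Finset.mul_sum, Finset.sum_sub_distrib, mul_assoc]
  simp only [hpt] at hsumI
  have hi : IntegrableOn (fun y => y * |y| ^ (-1 - 2 * s) * (v (x - y) - v (x + y))) (Ioi 0) := by
    have : IntegrableOn (fun y => c⁻¹ * (c * (y * |y| ^ (-1 - 2 * s) * (v (x - y) - v (x + y)))))
      (Ioi 0) := hsumI.const_mul c⁻¹
    simpa only [inv_mul_cancel_left₀ hc] using this
  have hB := lemB s hs u v x R E hEf.countable hu_cont huR (fun t ht => hderiv t (hEn t ht))
    (by
      filter_upwards [hEf.isClosed.isOpen_compl.mem_nhds hxE] with t ht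
      exact hderiv t (hEn t ht))
    (ContDiffAt.sum fun i _ => hvi_C1 i) hi
  refine ⟨∑ i, ∫ y in Ioi 0, (c * (y * |y| ^ (-1 - 2 * s))) * (vi i (x - y) - vi i (x + y)), ?_, ?_⟩
  · have hfun : (fun t : ℝ => ∑ i : Fin M, ∫ y in Set.Ioo (a i) (b i), K (t - y) * deriv u y) =
        fun t => ∑ i, ∫ y, K (t - y) * vi i y := by
      funext t
      refine Finset.sum_congr rfl fun i _ => ?_
      rw [← integral_indicator measurableSet_Ioo]
      refine integral_congr_ae (Eventually.of_forall fun y => ?_)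
      simp only [hvi, indicator]
      split_ifs <;> simp
    rw [hfun]
    exact HasDerivAt.fun_sum fun i _ => (hA i).2
  · rw [← integral_finsetSum _ fun i _ => (hA i).1]
    simp only [hpt]
    rw [integral_const_mul]
    convert hB using 1
    have := hs.1.ne'
    field_simp

theorem stmt2 (s : ℝ) (hs : s ∈ Set.Ioo (0 : ℝ) 1)
    (M : ℕ) (hM : 1 ≤ M) (a b : Fin M → ℝ) (hab : ∀ i, a i < b i)
    (hdisj : ∀ i j, i ≠ j → Disjoint (Set.Icc (a i) (b i)) (Set.Icc (a j) (b j)))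
    (u : ℝ → ℝ) (hu_cont : Continuous u)
    (hu_C2 : ContDiffOn ℝ 2 u (⋃ i, Set.Ioo (a i) (b i)))
    (hu_zero : ∀ y, y ∉ ⋃ i, Set.Ioo (a i) (b i) → u y = 0)
    (hu_int : MeasureTheory.IntegrableOn (deriv u) (⋃ i, Set.Ioo (a i) (b i)))
    (x : ℝ) (hx : ∀ i, x ≠ a i ∧ x ≠ b i) :
    (s ≠ 1 / 2 →
      ∃ F' : ℝ,
        HasDerivAt
          (fun t : ℝ => ∑ i : Fin M, ∫ y in Set.Ioo (a i) (b i),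
            |t - y| ^ (1 - 2 * s) * deriv u y) F' x ∧
        HasFracLap s u x (Cs s * F')) ∧
    (s = 1 / 2 →
      ∃ G' : ℝ,
        HasDerivAt
          (fun t : ℝ => ∑ i : Fin M, ∫ y in Set.Ioo (a i) (b i),
            Real.log |t - y| * deriv u y) G' x ∧
        HasFracLap s u x ((1 / Real.pi) * G')) := by

  constructor
  · intro hne
    have hc : 1 - 2 * s ≠ 0 := fun h => hne (by linarith)
    exact main_gen s (1 - 2 * s) hs hc _ (good_pow s hs) M a b hdisj u hu_cont hu_C2 hu_zero
      hu_int x hx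
  · intro he
    obtain ⟨G', h1, h2⟩ := main_gen s 1 hs one_ne_zero _ (good_log s he) M a b hdisj u hu_cont
      hu_C2 hu_zero hu_int x hx
    refine ⟨G', h1, ?_⟩
    have e : C1 s / (2 * s * 1) = 1 / Real.pi := by
      rw [he, C1_half]
      norm_num
    rw [e] at h2
    exact h2
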